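/- Displacement is linearly bounded below by the distance to the Margulis domain (Proposition 4.8): For all real ε > 0 and δ > 0 there exists a constant c(ε,δ) > 0, depending only on ε and δ, satisfying the following property. Let (X,σ) be a proper δ-hyperbolic GCB-space and let g be a non-elliptic σ-isometry of X such that M_ε(g) ≠ ∅. Then for every x ∈ X it holds d(x, g x) ≥ c(ε,δ)·d(x, M_ε(g)). In particular, for all 0 < ε1 ≤ ε2, every point of M_{ε2}(g) lies at distance at most ε2/c(ε1,δ) from M_{ε1}(g). -/

import Mathlib

/-!
Fix `n = 2 ^ k` with `n * ε` much larger than `δ`. The heart of the matter is that `M_{2ε}(g)` lies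
in a bounded neighbourhood of `M_ε(g)`: let `x ∈ M_{2ε}(g)` and let `p` be almost nearest to `x` in
`M_ε(g)`. Successive midpoints produce a point `z` near `p` whose displacement is at most
`d(p, gⁿ p) / n`. If `z` moves by at most `ε / 2`, convexity of the displacement along `[z, x]` puts
a definite fraction of that segment into `M_ε(g)`, so `x` cannot be far from it. Otherwise `p` and
`gⁿ p` are far apart; they are almost nearest to `x` and `gⁿ x` in the convex, `g`-invariant set
`M_ε(g)`, so by hyperbolicity `d(x, gⁿ x) ≥ 2 d(x, p) - O(δ)`, while `d(x, gⁿ x) ≤ 2 n ε`.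

Convexity of the displacement along segments issuing from `M_ε(g)` then turns this bound on
`M_{2ε}(g)` into linear growth everywhere.
-/

open Metric Filter

/-- Four-points condition for `δ`-hyperbolicity. -/
def IsDeltaHyperbolic (X : Type*) [MetricSpace X] (δ : ℝ) : Prop :=
  ∀ x y z w : X,
    dist x y + dist z w ≤ max (dist x z + dist y w) (dist x w + dist y z) + 2 * δ

/-- `X` is `P₀`-packed at scale `r₀`: any subset of a closed ball of radius `3r₀` whose
points are pairwise at distance `> 2r₀` has cardinality at most `P₀`. -/
def IsPacked (X : Type*) [MetricSpace X] (P₀ r₀ : ℝ) : Prop :=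
  ∀ x : X, ∀ S : Finset X, (↑S ⊆ closedBall x (3 * r₀)) →
    (∀ a ∈ S, ∀ b ∈ S, a ≠ b → 2 * r₀ < dist a b) → (S.card : ℝ) ≤ P₀

/-- A geodesically complete, convex, consistent, reversible geodesic bicombing on `X`.
Together with completeness of `X` this is the notion of GCB-space. -/
structure IsGCB {X : Type*} [MetricSpace X] (σ : X → X → ℝ → X) : Prop where
  source : ∀ x y : X, σ x y 0 = x
  target : ∀ x y : X, σ x y 1 = y
  geodesic : ∀ x y : X, ∀ t ∈ Set.Icc (0:ℝ) 1, ∀ t' ∈ Set.Icc (0:ℝ) 1,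
    dist (σ x y t) (σ x y t') = |t - t'| * dist x y
  convex : ∀ x y x' y' : X,
    ConvexOn ℝ (Set.Icc (0:ℝ) 1) fun t => dist (σ x y t) (σ x' y' t)
  consistent : ∀ x y : X, ∀ s t l : ℝ, 0 ≤ s → s ≤ t → t ≤ 1 → l ∈ Set.Icc (0:ℝ) 1 →
    σ (σ x y s) (σ x y t) l = σ x y ((1 - l) * s + l * t)
  reversible : ∀ x y : X, ∀ t ∈ Set.Icc (0:ℝ) 1, σ x y t = σ y x (1 - t)
  geodComplete : ∀ x y : X, ∃ γ : ℝ → X, Isometry γ ∧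
    (∀ s t : ℝ, s ≤ t → ∀ l ∈ Set.Icc (0:ℝ) 1, σ (γ s) (γ t) l = γ (s + l * (t - s))) ∧
    (∀ t ∈ Set.Icc (0:ℝ) 1, σ x y t = γ (t * dist x y))

/-- `g` is a `σ`-isometry: a surjective isometry preserving the bicombing `σ`. -/
def IsSigmaIsometry {X : Type*} [MetricSpace X] (σ : X → X → ℝ → X) (g : X ≃ᵢ X) : Prop :=
  ∀ x y : X, ∀ t ∈ Set.Icc (0:ℝ) 1, g (σ x y t) = σ (g x) (g y) t

/-- A group of isometries is discrete if for every `x` and `R` only finitely many of its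
elements displace `x` at most `R`. -/
def IsDiscreteSubgroup {X : Type*} [MetricSpace X] (Γ : Subgroup (X ≃ᵢ X)) : Prop :=
  ∀ x : X, ∀ R : ℝ, {g : X ≃ᵢ X | g ∈ Γ ∧ dist x (g x) ≤ R}.Finite

/-- A group is virtually nilpotent if it has a nilpotent subgroup of finite index. -/
def IsVirtuallyNilpotent (G : Type*) [Group G] : Prop :=
  ∃ H : Subgroup G, H.FiniteIndex ∧ Group.IsNilpotent H

/-- `Γ` is non-elementary: it contains two elements generating a subgroup that is not
virtually nilpotent. -/
def IsNonElementary {X : Type*} [MetricSpace X] (Γ : Subgroup (X ≃ᵢ X)) : Prop :=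
  ∃ a b : X ≃ᵢ X, a ∈ Γ ∧ b ∈ Γ ∧
    ¬ IsVirtuallyNilpotent ↥(Subgroup.closure ({a, b} : Set (X ≃ᵢ X)))

/-- An isometry is non-elliptic if its orbits are unbounded. -/
def IsNonElliptic {X : Type*} [MetricSpace X] (g : X ≃ᵢ X) : Prop :=
  ∀ x : X, ¬ Bornology.IsBounded (Set.range fun n : ℤ => (g ^ n) x)

/-- The `r`-almost stabilizer `Γ_r(x)`, generated by the elements of `Γ` displacing `x`
at most `r`. -/
def almostStabilizer {X : Type*} [MetricSpace X] (Γ : Subgroup (X ≃ᵢ X)) (r : ℝ) (x : X) :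
    Subgroup (X ≃ᵢ X) :=
  Subgroup.closure {g : X ≃ᵢ X | g ∈ Γ ∧ dist x (g x) ≤ r}

/-- The nilpotence radius of `Γ` at `x`. -/
noncomputable def nilrad {X : Type*} [MetricSpace X] (Γ : Subgroup (X ≃ᵢ X)) (x : X) : ℝ :=
  sSup {r : ℝ | 0 ≤ r ∧ IsVirtuallyNilpotent ↥(almostStabilizer Γ r x)}

/-- The Margulis domain `M_ε(g)`. -/
def margulisDomain {X : Type*} [MetricSpace X] (g : X ≃ᵢ X) (ε : ℝ) : Set X :=
  {x : X | dist x (g x) ≤ ε}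

/-- The generalized Margulis domain `ℳ_ε(g) = ⋃_{i ≠ 0} M_ε(gⁱ)`. -/
def genMargulisDomain {X : Type*} [MetricSpace X] (g : X ≃ᵢ X) (ε : ℝ) : Set X :=
  ⋃ i ∈ {i : ℤ | i ≠ 0}, margulisDomain (g ^ i) ε

/-- `f` parameterizes a geodesic segment from `x` to `y` on `[0, dist x y]`. -/
def IsGeodesicFrom {X : Type*} [MetricSpace X] (f : ℝ → X) (x y : X) : Prop :=
  f 0 = x ∧ f (dist x y) = y ∧
    ∀ s ∈ Set.Icc 0 (dist x y), ∀ t ∈ Set.Icc 0 (dist x y), dist (f s) (f t) = |s - t|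

/-- `X` is a geodesic space. -/
def IsGeodesicSpace (X : Type*) [MetricSpace X] : Prop :=
  ∀ x y : X, ∃ f : ℝ → X, IsGeodesicFrom f x y

/-- `C` is `lam`-quasiconvex: any two of its points are joined by a geodesic contained in
the closed `lam`-neighbourhood of `C`. -/
def IsQuasiconvex {X : Type*} [MetricSpace X] (lam : ℝ) (C : Set X) : Prop :=
  ∀ x ∈ C, ∀ y ∈ C, ∃ f : ℝ → X, IsGeodesicFrom f x y ∧
    ∀ t ∈ Set.Icc 0 (dist x y), infDist (f t) C ≤ lam

/-- `C` is a convex subset: any two of its points are joined by a geodesic inside `C`. -/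
def IsConvexSubset {X : Type*} [MetricSpace X] (C : Set X) : Prop :=
  ∀ x ∈ C, ∀ y ∈ C, ∃ f : ℝ → X, IsGeodesicFrom f x y ∧
    ∀ t ∈ Set.Icc 0 (dist x y), f t ∈ C

/-- Arc-length concatenation of three paths, of respective lengths `d₁`, `d₂` and the rest. -/
noncomputable def concatPath {X : Type*} (d₁ d₂ : ℝ) (f₁ f₂ f₃ : ℝ → X) : ℝ → X :=
  fun t => if t ≤ d₁ then f₁ t else if t ≤ d₁ + d₂ then f₂ (t - d₁) else f₃ (t - d₁ - d₂)

/-- A reversible conical geodesic bicombing: `σ x y` is a constant speed geodesic from `x` to `y`,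
and distances between two such geodesics are bounded by affine interpolation from the endpoints.
This weakens `IsGCB`: neither convexity in `t`, nor consistency, nor geodesic completeness is
required. -/
structure IsReversibleConicalBicombing {X : Type*} [MetricSpace X] (σ : X → X → ℝ → X) :
    Prop where
  source : ∀ x y : X, σ x y 0 = x
  target : ∀ x y : X, σ x y 1 = y
  geodesic : ∀ x y : X, ∀ t ∈ Set.Icc (0 : ℝ) 1, ∀ t' ∈ Set.Icc (0 : ℝ) 1,
    dist (σ x y t) (σ x y t') = |t - t'| * dist x y
  conical : ∀ x y x' y' : X, ∀ t ∈ Set.Icc (0 : ℝ) 1,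
    dist (σ x y t) (σ x' y' t) ≤ (1 - t) * dist x x' + t * dist y y'
  reversible : ∀ x y : X, ∀ t ∈ Set.Icc (0 : ℝ) 1, σ x y t = σ y x (1 - t)

section MargulisDomain

variable {X : Type*} [MetricSpace X] {σ : X → X → ℝ → X} {g h : X ≃ᵢ X} {δ ε : ℝ}

theorem IsGCB.isReversibleConicalBicombing (hσ : IsGCB σ) : IsReversibleConicalBicombing σ where
  source := hσ.source
  target := hσ.target
  geodesic := hσ.geodesic
  conical x y x' y' t ht := by
    have hconvex := (hσ.convex x y x' y').2 (Set.left_mem_Icc.2 zero_le_one)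
      (Set.right_mem_Icc.2 zero_le_one) (sub_nonneg.2 ht.2) ht.1 (sub_add_cancel 1 t)
    simpa [hσ.source, hσ.target] using hconvex
  reversible := hσ.reversible

namespace IsReversibleConicalBicombing

theorem dist_source (hσ : IsReversibleConicalBicombing σ) (x y : X) {t : ℝ}
    (ht : t ∈ Set.Icc (0 : ℝ) 1) : dist x (σ x y t) = t * dist x y := by
  have hgeodesic := hσ.geodesic x y 0 (Set.left_mem_Icc.2 zero_le_one) t ht
  rwa [hσ.source, zero_sub, abs_neg, abs_of_nonneg ht.1] at hgeodesic

theorem dist_target (hσ : IsReversibleConicalBicombing σ) (x y : X) {t : ℝ}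
    (ht : t ∈ Set.Icc (0 : ℝ) 1) : dist (σ x y t) y = (1 - t) * dist x y := by
  have hgeodesic := hσ.geodesic x y t ht 1 (Set.right_mem_Icc.2 zero_le_one)
  rwa [hσ.target, abs_sub_comm, abs_of_nonneg (sub_nonneg.2 ht.2)] at hgeodesic

end IsReversibleConicalBicombing

theorem IsSigmaIsometry.pow (hg : IsSigmaIsometry σ g) (n : ℕ) : IsSigmaIsometry σ (g ^ n) := by
  induction n with
  | zero => exact fun _ _ _ _ => rfl
  | succ n ih =>
    intro x y t ht
    simp only [pow_succ, IsometryEquiv.mul_apply]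
    rw [hg x y t ht, ih _ _ t ht]

theorem mem_margulisDomain {x : X} : x ∈ margulisDomain g ε ↔ dist x (g x) ≤ ε := Iff.rfl

theorem margulisDomain_mono : Monotone (margulisDomain g) := fun _ _ hab _ hx => hx.trans hab

theorem dist_pow_apply_le (g : X ≃ᵢ X) (x : X) (n : ℕ) :
    dist x ((g ^ n) x) ≤ n * dist x (g x) := by
  induction n with
  | zero => simp
  | succ n ih =>
    calc dist x ((g ^ (n + 1)) x)
        ≤ dist x ((g ^ n) x) + dist ((g ^ n) x) ((g ^ n) (g x)) := by
          rw [pow_succ, IsometryEquiv.mul_apply]; exact dist_triangle _ _ _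
      _ ≤ n * dist x (g x) + dist x (g x) := by rw [(g ^ n).dist_eq]; gcongr
      _ = (n + 1 : ℕ) * dist x (g x) := by push_cast; ring

theorem displacement_apply_of_commute (hc : Commute h g) (x : X) :
    dist (h x) (g (h x)) = dist x (g x) := by
  rw [← IsometryEquiv.mul_apply, ← hc.eq, IsometryEquiv.mul_apply, h.dist_eq]

theorem apply_mem_margulisDomain_iff_of_commute (hc : Commute h g) {x : X} :
    h x ∈ margulisDomain g ε ↔ x ∈ margulisDomain g ε := by
  simp only [mem_margulisDomain, displacement_apply_of_commute hc]

theorem infDist_apply_margulisDomain_of_commute (hc : Commute h g) (x : X) :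
    infDist (h x) (margulisDomain g ε) = infDist x (margulisDomain g ε) := by
  have hpreimage : h ⁻¹' margulisDomain g ε = margulisDomain g ε :=
    Set.ext fun _ => apply_mem_margulisDomain_iff_of_commute hc
  calc infDist (h x) (margulisDomain g ε)
      = infDist (h x) (h '' (h ⁻¹' margulisDomain g ε)) := by
        rw [Set.image_preimage_eq _ h.surjective]
    _ = infDist x (margulisDomain g ε) := by rw [infDist_image h.isometry, hpreimage]

namespace IsReversibleConicalBicombing

theorem displacement_le (hσ : IsReversibleConicalBicombing σ) (hg : IsSigmaIsometry σ g)
    (x y : X) {t : ℝ} (ht : t ∈ Set.Icc (0 : ℝ) 1) :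
    dist (σ x y t) (g (σ x y t)) ≤ (1 - t) * dist x (g x) + t * dist y (g y) := by
  rw [hg x y t ht]
  exact hσ.conical x y (g x) (g y) t ht

theorem bicombing_mem_margulisDomain (hσ : IsReversibleConicalBicombing σ)
    (hg : IsSigmaIsometry σ g) {a b : ℝ} {x y : X} (hx : x ∈ margulisDomain g a)
    (hy : y ∈ margulisDomain g b) {t : ℝ} (ht : t ∈ Set.Icc (0 : ℝ) 1) :
    σ x y t ∈ margulisDomain g ((1 - t) * a + t * b) :=
  (hσ.displacement_le hg x y ht).trans <| add_le_add
    (mul_le_mul_of_nonneg_left hx (sub_nonneg.2 ht.2)) (mul_le_mul_of_nonneg_left hy ht.1)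

theorem displacement_midpoint_le (hσ : IsReversibleConicalBicombing σ) (hg : IsSigmaIsometry σ g)
    (x : X) :
    2 * dist (σ x (g x) (1 / 2)) (g (σ x (g x) (1 / 2))) ≤ dist x (g (g x)) := by
  have ht : (1 / 2 : ℝ) ∈ Set.Icc (0 : ℝ) 1 := by norm_num
  -- Reversing the second segment makes both segments end at `g x`.
  have hmid : g (σ x (g x) (1 / 2)) = σ (g (g x)) (g x) (1 / 2) := by
    rw [hg x (g x) _ ht, hσ.reversible _ _ _ ht]
    norm_num
  have hconical := hσ.conical x (g x) (g (g x)) (g x) _ ht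
  rw [dist_self] at hconical
  rw [hmid]
  linarith

theorem exists_two_pow_mul_displacement_le (hσ : IsReversibleConicalBicombing σ)
    (hg : IsSigmaIsometry σ g) (k : ℕ) (p : X) :
    ∃ z, dist p z ≤ 2 ^ k * dist p (g p) ∧
      2 ^ k * dist z (g z) ≤ dist p ((g ^ 2 ^ k) p) := by
  induction k generalizing p with
  | zero => exact ⟨p, by simp, by simp⟩
  | succ k ih =>
    have ht : (1 / 2 : ℝ) ∈ Set.Icc (0 : ℝ) 1 := by norm_num
    set h := g ^ 2 ^ k with hh
    set m := σ p (h p) (1 / 2)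
    have hsq : (g ^ 2 ^ (k + 1)) p = h (h p) := by
      rw [hh, ← IsometryEquiv.mul_apply, ← pow_add, pow_succ, mul_two]
    have hpm : dist p m = 1 / 2 * dist p (h p) := hσ.dist_source p (h p) ht
    have hph : dist p (h p) ≤ 2 ^ k * dist p (g p) := by
      exact_mod_cast dist_pow_apply_le g p (2 ^ k)
    have hm : dist m (g m) ≤ dist p (g p) := by
      have hconv := hσ.displacement_le hg p (h p) ht
      rw [displacement_apply_of_commute (Commute.pow_self g _)] at hconv
      linarith
    have hmh : 2 * dist m (h m) ≤ dist p (h (h p)) := hσ.displacement_midpoint_le (hg.pow _) p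
    obtain ⟨z, hmz, hz⟩ := ih m
    refine ⟨z, ?_, ?_⟩
    · calc dist p z ≤ dist p m + dist m z := dist_triangle p m z
        _ ≤ dist p (h p) + 2 ^ k * dist p (g p) := by
          gcongr
          · linarith [dist_nonneg (x := p) (y := h p)]
          · exact hmz.trans (by gcongr)
        _ ≤ 2 ^ (k + 1) * dist p (g p) := by rw [pow_succ]; linarith
    · rw [hsq, pow_succ]
      linarith

end IsReversibleConicalBicombing

namespace IsDeltaHyperbolic

theorem nonneg (hX : IsDeltaHyperbolic X δ) (x : X) : 0 ≤ δ := by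
  simpa using hX x x x x

theorem dist_add_half_dist_le (hX : IsDeltaHyperbolic X δ) {η : ℝ} (hη : 0 ≤ η) {x p q m : X}
    (hpm : dist p m = dist p q / 2) (hmq : dist m q = dist p q / 2)
    (hx : dist x p ≤ dist x m + η) :
    dist x p + dist p q / 2 ≤ dist x q + (3 * η + 6 * δ) := by
  have hδ := hX.nonneg x
  have hfour := hX x m p q
  rw [dist_comm m p] at hfour
  rcases le_total (dist x q + dist p m) (dist x p + dist m q) with hshort | hlong
  · rw [max_eq_left hshort] at hfour
    have hpq : dist p q / 2 ≤ η + 2 * δ := by linarith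
    linarith [dist_triangle_right x p q, hpq]
  · rw [max_eq_right hlong] at hfour
    linarith

theorem dist_add_dist_le_of_dist_le_midpoint (hX : IsDeltaHyperbolic X δ) {η : ℝ} (hη : 0 ≤ η)
    {x y p q m : X} (hpm : dist p m = dist p q / 2) (hmq : dist m q = dist p q / 2)
    (hx : dist x p ≤ dist x m + η) (hy : dist y q ≤ dist y m + η)
    (hpq : 6 * η + 14 * δ < dist p q) :
    dist x p + dist y q ≤ dist x y + (6 * η + 14 * δ) := by
  have hxq := hX.dist_add_half_dist_le hη hpm hmq hx
  have hyp := hX.dist_add_half_dist_le hη (p := q) (q := p)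
    (by rw [dist_comm, hmq, dist_comm p]) (by rw [dist_comm, hpm, dist_comm p]) hy
  have hfour := hX x q y p
  rw [dist_comm q p] at hyp hfour
  rw [dist_comm q y] at hfour
  rcases le_total (dist x y + dist p q) (dist x p + dist y q) with hshort | hlong
  · rw [max_eq_right hshort] at hfour
    linarith
  · rw [max_eq_left hlong] at hfour
    linarith

theorem two_mul_infDist_margulisDomain_le_of_commute (hX : IsDeltaHyperbolic X δ)
    (hσ : IsReversibleConicalBicombing σ) (hg : IsSigmaIsometry σ g) (hc : Commute h g) {η : ℝ}
    (hη : 0 ≤ η) {x p : X} (hp : p ∈ margulisDomain g ε)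
    (hxp : dist x p ≤ infDist x (margulisDomain g ε) + η)
    (hhp : 6 * η + 14 * δ < dist p (h p)) :
    2 * infDist x (margulisDomain g ε) ≤ dist x (h x) + (6 * η + 14 * δ) := by
  have ht : (1 / 2 : ℝ) ∈ Set.Icc (0 : ℝ) 1 := by norm_num
  set m := σ p (h p) (1 / 2)
  have hhp_mem : h p ∈ margulisDomain g ε := (apply_mem_margulisDomain_iff_of_commute hc).2 hp
  have hm : m ∈ margulisDomain g ε := by
    convert hσ.bicombing_mem_margulisDomain hg hp hhp_mem ht using 2
    ring
  have hpm : dist p m = dist p (h p) / 2 := by rw [hσ.dist_source _ _ ht]; ring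
  have hmh : dist m (h p) = dist p (h p) / 2 := by rw [hσ.dist_target _ _ ht]; ring
  have hx : dist x p ≤ dist x m + η := hxp.trans (by gcongr; exact infDist_le_dist_of_mem hm)
  have hhx : dist (h x) (h p) ≤ dist (h x) m + η := by
    rw [h.dist_eq]
    refine hxp.trans ?_
    rw [← infDist_apply_margulisDomain_of_commute hc]
    gcongr
    exact infDist_le_dist_of_mem hm
  have hlong := hX.dist_add_dist_le_of_dist_le_midpoint hη hpm hmh hx hhx hhp
  rw [h.dist_eq] at hlong
  linarith [infDist_le_dist_of_mem (x := x) hp]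

end IsDeltaHyperbolic

namespace IsReversibleConicalBicombing

theorem infDist_margulisDomain_le_of_mem_two_mul (hσ : IsReversibleConicalBicombing σ)
    (hδ : 0 < δ) (hX : IsDeltaHyperbolic X δ) (hg : IsSigmaIsometry σ g) {k : ℕ}
    (hk : 40 * δ ≤ 2 ^ k * ε) (hne : (margulisDomain g ε).Nonempty) {x : X}
    (hx : x ∈ margulisDomain g (2 * ε)) :
    infDist x (margulisDomain g ε) ≤ 3 * 2 ^ k * ε := by
  obtain ⟨p, hp, hxp⟩ := (infDist_lt_iff hne).1
    (lt_add_of_pos_right (infDist x (margulisDomain g ε)) hδ)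
  obtain ⟨z, hpz, hz⟩ := hσ.exists_two_pow_mul_displacement_le hg k p
  have hpz : dist p z ≤ 2 ^ k * ε := hpz.trans (by gcongr; exact hp)
  rcases le_or_gt (dist z (g z)) (ε / 2) with hslow | hfast
  · have ht : (1 / 3 : ℝ) ∈ Set.Icc (0 : ℝ) 1 := by norm_num
    have hmem : σ z x (1 / 3) ∈ margulisDomain g ε := by
      convert hσ.bicombing_mem_margulisDomain hg hslow hx ht using 2
      ring
    have hthird : infDist x (margulisDomain g ε) ≤ 2 / 3 * dist z x := by
      refine (infDist_le_dist_of_mem hmem).trans_eq ?_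
      rw [dist_comm, hσ.dist_target z x ht]
      norm_num
    linarith [dist_triangle_left z x p, dist_comm x p]
  · have hfar : 2 ^ k * (ε / 2) < dist p ((g ^ 2 ^ k) p) := lt_of_lt_of_le (by gcongr) hz
    -- With `η = δ`, the separation `6 * η + 14 * δ` is half of the `40 * δ` in `hk`.
    have hlower := hX.two_mul_infDist_margulisDomain_le_of_commute hσ hg
      (Commute.pow_self g (2 ^ k)) hδ.le hp hxp.le (by linarith)
    have hupper : dist x ((g ^ 2 ^ k) x) ≤ 2 ^ k * (2 * ε) :=
      calc dist x ((g ^ 2 ^ k) x) ≤ 2 ^ k * dist x (g x) := by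
            exact_mod_cast dist_pow_apply_le g x (2 ^ k)
        _ ≤ 2 ^ k * (2 * ε) := by gcongr; exact hx
    linarith

theorem mul_infDist_margulisDomain_le (hσ : IsReversibleConicalBicombing σ) (hε : 0 < ε)
    (hg : IsSigmaIsometry σ g) (hne : (margulisDomain g ε).Nonempty) {R : ℝ}
    (hnear : ∀ y ∈ margulisDomain g (2 * ε), infDist y (margulisDomain g ε) ≤ R) (x : X) :
    ε * infDist x (margulisDomain g ε) ≤ R * dist x (g x) := by
  by_cases hx : x ∈ margulisDomain g ε
  · have hR : 0 ≤ R :=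
      infDist_nonneg.trans (hnear x (margulisDomain_mono (by linarith) hx))
    rw [infDist_zero_of_mem hx, mul_zero]
    positivity
  have hlt : ε < dist x (g x) := not_le.1 hx
  have hpos : 0 < dist x (g x) := hε.trans hlt
  -- Chosen so that points at time `t` on segments from `M_ε(g)` to `x` lie in `M_{2ε}(g)`.
  set t := ε / dist x (g x) with ht_def
  have ht1 : t < 1 := (div_lt_one hpos).2 hlt
  have ht : t ∈ Set.Icc (0 : ℝ) 1 := ⟨by positivity, ht1.le⟩
  have hbound : ∀ p ∈ margulisDomain g ε,
      infDist x (margulisDomain g ε) ≤ R + (1 - t) * dist x p := by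
    intro p hp
    have hy : σ p x t ∈ margulisDomain g (2 * ε) := by
      refine margulisDomain_mono ?_ (hσ.bicombing_mem_margulisDomain hg hp
        (mem_margulisDomain.2 (le_refl (dist x (g x)))) ht)
      rw [ht_def, div_mul_cancel₀ ε hpos.ne', ← ht_def]
      linarith [mul_nonneg ht.1 hε.le]
    calc infDist x (margulisDomain g ε)
        ≤ infDist (σ p x t) (margulisDomain g ε) + dist x (σ p x t) :=
          infDist_le_infDist_add_dist
      _ ≤ R + (1 - t) * dist x p := by
          rw [dist_comm x (σ p x t), hσ.dist_target p x ht, dist_comm p x]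
          gcongr
          exact hnear _ hy
  have hinf : (infDist x (margulisDomain g ε) - R) / (1 - t) ≤ infDist x (margulisDomain g ε) := by
    refine (le_infDist hne).2 fun p hp => ?_
    rw [div_le_iff₀ (sub_pos.2 ht1)]
    linarith [hbound p hp]
  rw [div_le_iff₀ (sub_pos.2 ht1)] at hinf
  have htR : t * infDist x (margulisDomain g ε) ≤ R := by linarith
  rwa [ht_def, div_mul_eq_mul_div, div_le_iff₀ hpos] at htR

end IsReversibleConicalBicombing

end MargulisDomain

theorem displacement_bounded_by_distance_to_margulis_domain_general
    (ε δ : ℝ) (hε : 0 < ε) (hδ : 0 < δ) :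
    ∃ c : ℝ, 0 < c ∧
      ∀ (X : Type*) [MetricSpace X] (σ : X → X → ℝ → X),
        IsReversibleConicalBicombing σ → IsDeltaHyperbolic X δ →
        ∀ g : X ≃ᵢ X, IsSigmaIsometry σ g → (margulisDomain g ε).Nonempty →
          (∀ x : X, c * infDist x (margulisDomain g ε) ≤ dist x (g x)) ∧
          (∀ ε₂ : ℝ, ∀ x ∈ margulisDomain g ε₂, infDist x (margulisDomain g ε) ≤ ε₂ / c) := by
  obtain ⟨k, hk⟩ := pow_unbounded_of_one_lt (40 * δ / ε) (one_lt_two (α := ℝ))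
  rw [div_lt_iff₀ hε] at hk
  have hR : (0 : ℝ) < 3 * 2 ^ k * ε := by positivity
  refine ⟨ε / (3 * 2 ^ k * ε), by positivity, fun X _ σ hσ hX g hg hne => ?_⟩
  have hlinear (x : X) :
      ε / (3 * 2 ^ k * ε) * infDist x (margulisDomain g ε) ≤ dist x (g x) := by
    rw [div_mul_eq_mul_div, div_le_iff₀' hR]
    exact hσ.mul_infDist_margulisDomain_le hε hg hne
      (fun _ hy => hσ.infDist_margulisDomain_le_of_mem_two_mul hδ hX hg hk.le hne hy) x
  refine ⟨hlinear, fun ε₂ x hx => ?_⟩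
  rw [le_div_iff₀' (by positivity)]
  exact (hlinear x).trans hx

/-- **Proposition 4.8**: the displacement is linearly bounded below by the distance to the
Margulis domain; in particular every point of `M_{ε₂}(g)` lies at distance at most
`ε₂/c(ε,δ)` from `M_ε(g)`. -/
theorem displacement_bounded_by_distance_to_margulis_domain
    (ε δ : ℝ) (hε : 0 < ε) (hδ : 0 < δ) :
    ∃ c : ℝ, 0 < c ∧
      ∀ (X : Type*) [MetricSpace X] [ProperSpace X] (σ : X → X → ℝ → X),
        IsGCB σ → IsDeltaHyperbolic X δ →
        ∀ g : X ≃ᵢ X, IsSigmaIsometry σ g → IsNonElliptic g →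
          (margulisDomain g ε).Nonempty →
          (∀ x : X, c * infDist x (margulisDomain g ε) ≤ dist x (g x)) ∧
          (∀ ε₂ : ℝ, ε ≤ ε₂ → ∀ x ∈ margulisDomain g ε₂,
            infDist x (margulisDomain g ε) ≤ ε₂ / c) := by
  obtain ⟨c, hc, h⟩ := displacement_bounded_by_distance_to_margulis_domain_general ε δ hε hδ
  exact ⟨c, hc, fun X _ _ σ hσ hX g hg _ hne =>
    (h X σ hσ.isReversibleConicalBicombing hX g hg hne).imp_right fun h' ε₂ _ => h' ε₂⟩
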